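/- Let Γ be a countable group. If Γ has a projective unitary representation on some complex Hilbert space which is both irreducible and projectively faithful, then there exists a countable group Δ admitting a faithful irreducible unitary representation on a complex Hilbert space such that Δ/Z(Δ) is isomorphic to Γ. -/

import Mathlib

/-- A projective unitary representation: a map into the unitary operators sending `1` to `id`
whose composition with the quotient by the circle is a homomorphism. -/
def IsProjUnitaryRep {G : Type*} [Group G] {H : Type*} [NormedAddCommGroup H]
    [InnerProductSpace ℂ H] [CompleteSpace H] (π : G → (H →L[ℂ] H)) : Prop :=
  (∀ x, π x ∈ unitary (H →L[ℂ] H)) ∧ π 1 = 1 ∧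
    ∀ x y, ∃ z : Circle, π x * π y = (z : ℂ) • π (x * y)

/-- The projective kernel of a projective representation. -/
def ProjKer {G : Type*} [Group G] {H : Type*} [NormedAddCommGroup H]
    [InnerProductSpace ℂ H] [CompleteSpace H] (π : G → (H →L[ℂ] H)) : Set G :=
  {x | ∃ z : Circle, π x = (z : ℂ) • (1 : H →L[ℂ] H)}

/-- Projective faithfulness. -/
def PFaithful {G : Type*} [Group G] {H : Type*} [NormedAddCommGroup H]
    [InnerProductSpace ℂ H] [CompleteSpace H] (π : G → (H →L[ℂ] H)) : Prop :=
  ∀ x, x ∈ ProjKer π → x = 1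

/-- Irreducibility: the only closed invariant subspaces are `⊥` and `⊤`. -/
def IsIrreducibleRep {G : Type*} {H : Type*} [NormedAddCommGroup H]
    [InnerProductSpace ℂ H] [CompleteSpace H] (π : G → (H →L[ℂ] H)) : Prop :=
  ∀ K : Submodule ℂ H, IsClosed (K : Set H) → (∀ x, ∀ v ∈ K, π x v ∈ K) → K = ⊥ ∨ K = ⊤

/-- An (ordinary) unitary representation. -/
def IsUnitaryRep {G : Type*} [Group G] {H : Type*} [NormedAddCommGroup H]
    [InnerProductSpace ℂ H] [CompleteSpace H] (π : G → (H →L[ℂ] H)) : Prop :=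
  (∀ x, π x ∈ unitary (H →L[ℂ] H)) ∧ π 1 = 1 ∧ ∀ x y, π (x * y) = π x * π y

/-- A multiplier (2-cocycle) with values in the circle group. -/
def IsMultiplier {G : Type*} [Group G] (ζ : G → G → Circle) : Prop :=
  (∀ x, ζ 1 x = 1) ∧ (∀ x, ζ x 1 = 1) ∧
    ∀ x y z, ζ x y * ζ (x * y) z = ζ x (y * z) * ζ y z

/-- A normalised multiplier. -/
def IsNormalised {G : Type*} [Group G] (ζ : G → G → Circle) : Prop :=
  ∀ x : G, ζ x x⁻¹ = 1

/-- A ζ-representation of `G`. -/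
def IsZetaRep {G : Type*} [Group G] {H : Type*} [NormedAddCommGroup H]
    [InnerProductSpace ℂ H] [CompleteSpace H] (ζ : G → G → Circle)
    (π : G → (H →L[ℂ] H)) : Prop :=
  (∀ x, π x ∈ unitary (H →L[ℂ] H)) ∧ π 1 = 1 ∧
    ∀ x y, π x * π y = ((ζ x y : ℂ)) • π (x * y)

/-- A ζ-representation of a subgroup `N` of `G` (with respect to the restriction of ζ). -/
def IsZetaRepOn {G : Type*} [Group G] {H : Type*} [NormedAddCommGroup H]
    [InnerProductSpace ℂ H] [CompleteSpace H] (ζ : G → G → Circle) (N : Subgroup G)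
    (σ : N → (H →L[ℂ] H)) : Prop :=
  (∀ x, σ x ∈ unitary (H →L[ℂ] H)) ∧ σ 1 = 1 ∧
    ∀ x y : N, σ x * σ y = ((ζ (x : G) (y : G) : ℂ)) • σ (x * y)

open scoped Classical in
/-- The conjugate `σ^γ` of a projective representation `σ` of a (normal) subgroup `N`:
`σ^γ(x) = ζ(γ,x)·ζ(γx,γ⁻¹)·σ(γxγ⁻¹)`. -/
noncomputable def conjRep {G : Type*} [Group G] {H : Type*} [NormedAddCommGroup H]
    [InnerProductSpace ℂ H] [CompleteSpace H] (ζ : G → G → Circle) (N : Subgroup G)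
    (σ : N → (H →L[ℂ] H)) (γ : G) (x : N) : H →L[ℂ] H :=
  if h : γ * (x : G) * γ⁻¹ ∈ N then
    ((ζ γ (x : G) : ℂ) * (ζ (γ * (x : G)) γ⁻¹ : ℂ)) • σ ⟨γ * (x : G) * γ⁻¹, h⟩
  else 1

/-- `σ` is Γ-P-faithful: the projective Γ-kernel
`{x ∈ N : ∃ z ∈ T, σ^γ(x) = z·id for all γ}` is trivial. -/
def GammaPFaithful {G : Type*} [Group G] {H : Type*} [NormedAddCommGroup H]
    [InnerProductSpace ℂ H] [CompleteSpace H] (ζ : G → G → Circle) (N : Subgroup G)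
    (σ : N → (H →L[ℂ] H)) : Prop :=
  ∀ x : N, (∃ z : Circle, ∀ γ : G, conjRep ζ N σ γ x = (z : ℂ) • (1 : H →L[ℂ] H)) → x = 1

/-- A finite foot of `G`: a finite minimal (nontrivial) normal subgroup. -/
def IsFiniteFoot {G : Type*} [Group G] (N : Subgroup G) : Prop :=
  N.Normal ∧ N ≠ ⊥ ∧ (∀ M : Subgroup G, M.Normal → M ≠ ⊥ → M ≤ N → M = N) ∧ Finite N

/-- The minisocle: the subgroup generated by all finite feet. -/
def minisocle (G : Type*) [Group G] : Subgroup G :=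
  ⨆ (N : Subgroup G) (_ : IsFiniteFoot N), N

/-- Property (Fab): the normal subgroup generated by any single conjugacy class has finite
abelianisation. -/
def PropertyFab (G : Type*) [Group G] : Prop :=
  ∀ g : G, Finite (Abelianization (Subgroup.normalClosure ({g} : Set G)))

/-- The subgroup generated by a countable family is countable. -/
theorem Subgroup.countable_closure_range {ι G : Type*} [Countable ι] [Group G] (f : ι → G) :
    Countable (Subgroup.closure (Set.range f)) := by
  have : Countable (FreeGroup ι) := by unfold FreeGroup; infer_instance
  rw [← FreeGroup.range_lift_eq_closure]
  exact (FreeGroup.lift f).rangeRestrict_surjective.countable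

/-- A normal element of a C⋆-algebra whose spectrum is contained in a singleton is a scalar. -/
theorem IsStarNormal.eq_smul_one_of_spectrum_subset {A : Type*} [CStarAlgebra A] {a : A}
    [IsStarNormal a] {c : ℂ} (h : spectrum ℂ a ⊆ {c}) : a = c • (1 : A) := by
  calc a = cfc (fun x : ℂ => x) a := (cfc_id' ℂ a).symm
    _ = cfc (fun _ : ℂ => c) a := cfc_congr fun _ hx => h hx
    _ = c • (1 : A) := by rw [cfc_const c a, Algebra.algebraMap_eq_smul_one]

/-- If the spectrum of a normal element contains two distinct points, the continuous functional
calculus produces two nonzero elements with product zero. -/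
theorem IsStarNormal.exists_cfc_mul_eq_zero {A : Type*} [CStarAlgebra A] {a : A}
    [IsStarNormal a] {b c : ℂ} (hb : b ∈ spectrum ℂ a) (hc : c ∈ spectrum ℂ a) (hbc : b ≠ c) :
    ∃ f g : ℂ → ℂ, cfc f a ≠ 0 ∧ cfc g a ≠ 0 ∧ cfc f a * cfc g a = 0 := by
  have : Nontrivial A := by
    by_contra hA
    have := not_nontrivial_iff_subsingleton.mp hA
    simp [spectrum.of_subsingleton] at hb
  let bump (p x : ℂ) : ℂ := ((max 0 (dist b c / 2 - dist x p) : ℝ) : ℂ)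
  have hcont (p : ℂ) : Continuous (bump p) := by fun_prop
  have hne (p : ℂ) (hp : p ∈ spectrum ℂ a) : cfc (bump p) a ≠ 0 := by
    intro h0
    have hmem : bump p p ∈ spectrum ℂ (cfc (bump p) a) := by
      rw [cfc_map_spectrum (bump p) a (hf := (hcont p).continuousOn)]
      exact ⟨p, hp, rfl⟩
    rw [h0, spectrum.zero_eq, Set.mem_singleton_iff] at hmem
    have hpos : 0 < dist b c := dist_pos.mpr hbc
    simp only [bump, dist_self, sub_zero, Complex.ofReal_eq_zero] at hmem
    have := le_max_right 0 (dist b c / 2)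
    linarith
  refine ⟨bump b, bump c, hne b hb, hne c hc, ?_⟩
  rw [← cfc_mul (bump b) (bump c) a (hcont b).continuousOn (hcont c).continuousOn]
  convert cfc_zero ℂ a using 2
  ext1 x
  have htri := dist_triangle_left b c x
  simp only [bump, Pi.zero_apply, mul_eq_zero, Complex.ofReal_eq_zero, max_eq_left_iff]
  by_contra! h
  linarith [h.1, h.2]

/-- **Schur's lemma** for unitary operators: a unitary commuting with an irreducible family of
operators is a scalar of modulus one. -/
theorem IsIrreducibleRep.exists_eq_circle_smul_one {G H : Type*} [NormedAddCommGroup H]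
    [InnerProductSpace ℂ H] [CompleteSpace H] {π : G → (H →L[ℂ] H)}
    (hπ : IsIrreducibleRep π) (T : unitary (H →L[ℂ] H))
    (hT : ∀ x, Commute (T : H →L[ℂ] H) (π x)) :
    ∃ z : Circle, (T : H →L[ℂ] H) = (z : ℂ) • (1 : H →L[ℂ] H) := by
  rcases subsingleton_or_nontrivial H with hH | hH
  · exact ⟨1, ContinuousLinearMap.ext fun _ => Subsingleton.elim _ _⟩
  have hstar (x : G) : Commute (star (T : H →L[ℂ] H)) (π x) := by
    have h : π x * (T : H →L[ℂ] H) = T * π x := (hT x).eq.symm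
    calc star (T : H →L[ℂ] H) * π x
        = star (T : H →L[ℂ] H) * (π x * T) * star (T : H →L[ℂ] H) := by
          rw [mul_assoc, mul_assoc, Unitary.mul_star_self_of_mem T.2, mul_one]
      _ = π x * star (T : H →L[ℂ] H) := by
          rw [h, ← mul_assoc, Unitary.star_mul_self_of_mem T.2, one_mul]
  obtain ⟨b, hb⟩ := spectrum.nonempty (T : H →L[ℂ] H)
  have hcirc : b ∈ Submonoid.unitSphere ℂ := Unitary.spectrum_subset_circle T hb
  refine ⟨⟨b, hcirc⟩, IsStarNormal.eq_smul_one_of_spectrum_subset fun c hc => ?_⟩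
  by_contra hcb
  obtain ⟨f, g, hf, hg, hfg⟩ := IsStarNormal.exists_cfc_mul_eq_zero hb hc (Ne.symm hcb)
  have hinv : ∀ x, ∀ v ∈ (cfc f (T : H →L[ℂ] H)).ker, π x v ∈ (cfc f (T : H →L[ℂ] H)).ker := by
    intro x v hv
    have hcomm := DFunLike.congr_fun ((hT x).cfc (hstar x) f).eq v
    simp only [mul_apply_eq_comp] at hcomm
    rw [LinearMap.mem_ker] at hv ⊢
    simp_all
  rcases hπ _ (cfc f (T : H →L[ℂ] H)).isClosed_ker hinv with h | h
  · refine hg (ContinuousLinearMap.ext fun v => ?_)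
    have hv : cfc g (T : H →L[ℂ] H) v ∈ (cfc f (T : H →L[ℂ] H)).ker :=
      DFunLike.congr_fun hfg v
    rw [h] at hv
    exact hv
  · refine hf (ContinuousLinearMap.ext fun v => ?_)
    have hv : v ∈ (cfc f (T : H →L[ℂ] H)).ker := h ▸ Submodule.mem_top
    exact hv

section CentralExtension

variable {Γ : Type*} [Group Γ] {H : Type*} [NormedAddCommGroup H] [InnerProductSpace ℂ H]
  [CompleteSpace H] {π : Γ → (H →L[ℂ] H)}

/-- The subgroup of `Γ × U(H)` generated by the graph of a projective unitary representation. -/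
noncomputable def IsProjUnitaryRep.extension (hπ : IsProjUnitaryRep π) :
    Subgroup (Γ × unitary (H →L[ℂ] H)) :=
  Subgroup.closure (Set.range fun x => (x, ⟨π x, hπ.1 x⟩))

namespace IsProjUnitaryRep

variable (hπ : IsProjUnitaryRep π)

theorem graph_mem_extension (x : Γ) :
    ((x, ⟨π x, hπ.1 x⟩) : Γ × unitary (H →L[ℂ] H)) ∈ hπ.extension :=
  Subgroup.subset_closure ⟨x, rfl⟩

theorem exists_eq_circle_smul {p : Γ × unitary (H →L[ℂ] H)} (hp : p ∈ hπ.extension) :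
    ∃ z : Circle, (p.2 : H →L[ℂ] H) = (z : ℂ) • π p.1 := by
  induction hp using Subgroup.closure_induction with
  | mem p hp =>
    obtain ⟨x, rfl⟩ := hp
    exact ⟨1, by simp⟩
  | one => exact ⟨1, by simp [hπ.2.1]⟩
  | mul p q _ _ hp hq =>
    obtain ⟨z, hz⟩ := hp
    obtain ⟨w, hw⟩ := hq
    obtain ⟨c, hc⟩ := hπ.2.2 p.1 q.1
    refine ⟨z * w * c, ?_⟩
    simp only [Prod.snd_mul, Prod.fst_mul, Submonoid.coe_mul, Circle.coe_mul]
    rw [hz, hw, smul_mul_smul_comm, hc, smul_smul]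
  | inv p _ hp =>
    obtain ⟨z, hz⟩ := hp
    obtain ⟨c, hc⟩ := hπ.2.2 p.1 p.1⁻¹
    rw [mul_inv_cancel, hπ.2.1] at hc
    refine ⟨z⁻¹ * c⁻¹, ?_⟩
    have hright : (p.2 : H →L[ℂ] H) * (((z⁻¹ * c⁻¹ : Circle) : ℂ) • π p.1⁻¹) = 1 := by
      rw [hz, smul_mul_smul_comm, hc, smul_smul, ← Circle.coe_mul, ← Circle.coe_mul]
      simp
    have hleft : ((p.2⁻¹ : unitary (H →L[ℂ] H)) : H →L[ℂ] H) * (p.2 : H →L[ℂ] H) = 1 := by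
      rw [← Submonoid.coe_mul, inv_mul_cancel, Submonoid.coe_one]
    exact left_inv_eq_right_inv hleft hright

theorem fst_eq_one_of_snd_eq_circle_smul_one (hfaith : PFaithful π)
    {p : Γ × unitary (H →L[ℂ] H)} (hp : p ∈ hπ.extension) {w : Circle}
    (hw : (p.2 : H →L[ℂ] H) = (w : ℂ) • (1 : H →L[ℂ] H)) : p.1 = 1 := by
  obtain ⟨z, hz⟩ := hπ.exists_eq_circle_smul hp
  refine hfaith _ ⟨z⁻¹ * w, ?_⟩
  rw [Circle.coe_mul, mul_smul, ← hw, hz, smul_smul, ← Circle.coe_mul, inv_mul_cancel,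
    Circle.coe_one, one_smul]

/-- The projection of the extension to `Γ`. -/
noncomputable def extensionFst : hπ.extension →* Γ :=
  (MonoidHom.fst Γ (unitary (H →L[ℂ] H))).comp hπ.extension.subtype

/-- The projection of the extension to `U(H)`. -/
noncomputable def extensionSnd : hπ.extension →* unitary (H →L[ℂ] H) :=
  (MonoidHom.snd Γ (unitary (H →L[ℂ] H))).comp hπ.extension.subtype

theorem extensionFst_surjective : Function.Surjective hπ.extensionFst :=
  fun x => ⟨⟨_, hπ.graph_mem_extension x⟩, rfl⟩

theorem extensionSnd_injective (hfaith : PFaithful π) :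
    Function.Injective hπ.extensionSnd := by
  rw [injective_iff_map_eq_one]
  intro p hp
  have hp2 : (p : Γ × unitary (H →L[ℂ] H)).2 = 1 := hp
  have hp1 : (p : Γ × unitary (H →L[ℂ] H)).1 = 1 :=
    hπ.fst_eq_one_of_snd_eq_circle_smul_one hfaith p.2 (w := 1) (by simp [hp2])
  exact Subtype.ext (Prod.ext hp1 hp2)

theorem ker_extensionFst_eq_center (hirr : IsIrreducibleRep π) (hfaith : PFaithful π) :
    hπ.extensionFst.ker = Subgroup.center hπ.extension := by
  ext p
  rw [MonoidHom.mem_ker, Subgroup.mem_center_iff]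
  constructor
  · intro hp q
    have hp1 : (p : Γ × unitary (H →L[ℂ] H)).1 = 1 := hp
    obtain ⟨z, hz⟩ := hπ.exists_eq_circle_smul p.2
    rw [hp1, hπ.2.1] at hz
    refine Subtype.ext (Prod.ext ?_ (Subtype.ext ?_))
    · simp [hp1]
    · simp [hz]
  · intro hp
    obtain ⟨z, hz⟩ := hirr.exists_eq_circle_smul_one (p : Γ × unitary (H →L[ℂ] H)).2 fun x =>
      (congrArg (fun q : hπ.extension => ((q : Γ × unitary (H →L[ℂ] H)).2 : H →L[ℂ] H))
        (hp ⟨_, hπ.graph_mem_extension x⟩)).symm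
    exact hπ.fst_eq_one_of_snd_eq_circle_smul_one hfaith p.2 hz

end IsProjUnitaryRep

end CentralExtension

/-- Countable version: if a countable group Γ has an irreducible, projectively faithful
projective unitary representation, then there is a countable group Δ admitting a faithful
irreducible unitary representation with Δ/Z(Δ) ≅ Γ. -/
theorem stmt_2 (Γ : Type) [Group Γ] [Countable Γ]
    (H : Type) [NormedAddCommGroup H] [InnerProductSpace ℂ H] [CompleteSpace H]
    (π : Γ → (H →L[ℂ] H)) (hπ : IsProjUnitaryRep π) (hirr : IsIrreducibleRep π)
    (hfaith : PFaithful π) :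
    ∃ (Δ : Type) (_ : Group Δ) (_ : Countable Δ) (K : Type) (_ : NormedAddCommGroup K)
      (_ : InnerProductSpace ℂ K) (_ : CompleteSpace K) (φ : Δ → (K →L[ℂ] K)),
      IsUnitaryRep φ ∧ Function.Injective φ ∧ IsIrreducibleRep φ ∧
        Nonempty ((Δ ⧸ Subgroup.center Δ) ≃* Γ) := by
  refine ⟨hπ.extension, inferInstance, Subgroup.countable_closure_range _, H, inferInstance,
    inferInstance, inferInstance, fun p => hπ.extensionSnd p, ⟨fun p => (hπ.extensionSnd p).2,
      by simp, fun p q => by simp⟩, ?_, ?_, ?_⟩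
  · exact Subtype.val_injective.comp (hπ.extensionSnd_injective hfaith)
  · exact fun K hK hinv => hirr K hK fun x => hinv ⟨_, hπ.graph_mem_extension x⟩
  · exact ⟨(QuotientGroup.quotientMulEquivOfEq
      (hπ.ker_extensionFst_eq_center hirr hfaith).symm).trans
      (QuotientGroup.quotientKerEquivOfSurjective _ hπ.extensionFst_surjective)⟩
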